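/- arXiv:1702.00709 — 3 statements merged into one kernel-verified Lean document; each statement's English description precedes it below -/
import Mathlib

section
/- Let p ≥ 1 and let g : ℝ^p → ℝ be twice continuously differentiable, μ-strongly convex (∇²g(x) ⪰ μI for all x, with μ > 0), with Hessians Lipschitz continuous with constant L̃ > 0. Fix x* ∈ ℝ^p and set M = ∇²g(x*)^{−1/2}. Then for any z, z⁺ ∈ ℝ^p with s := z⁺ − z ≠ 0 and y := ∇g(z⁺) − ∇g(z), one has ‖My − M⁻¹s‖ ≤ (L̃/μ) · max{‖z − x*‖, ‖z⁺ − x*‖} · ‖M⁻¹s‖. -/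
open Matrix Filter RealInnerProductSpace

noncomputable section

abbrev Vec (p : ℕ) := EuclideanSpace ℝ (Fin p)
abbrev Mat (p : ℕ) := Matrix (Fin p) (Fin p) ℝ

/-- A matrix acting on Euclidean space as a linear map. -/
def applyM {p : ℕ} (A : Mat p) (v : Vec p) : Vec p := Matrix.toEuclideanCLM (𝕜 := ℝ) A v

/-- Operator norm of a matrix induced by the Euclidean vector norm. -/
def opNorm {p : ℕ} (A : Mat p) : ℝ := ‖Matrix.toEuclideanCLM (𝕜 := ℝ) A‖

/-- `H` is the Hessian (matrix of second derivatives) of `g`. -/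
def HasHessian {p : ℕ} (g : Vec p → ℝ) (H : Vec p → Mat p) : Prop :=
  ∀ x, HasFDerivAt (gradient g) (Matrix.toEuclideanCLM (𝕜 := ℝ) (H x) : Vec p →L[ℝ] Vec p) x

/-!
By the mean value inequality on the ball of radius `R = max ‖z - x*‖ ‖z⁺ - x*‖` about `x*`, the
gradient increment differs from `∇²g(x*) s` by a residual of norm at most `L̃ R ‖s‖`. Since `M` is
symmetric and `M ∇²g(x*) M = 1`, strong convexity at `x*` in the direction `M v` reads
`μ ‖M v‖² ≤ ‖v‖²`, so that `‖M‖² ≤ 1 / μ`. One factor `‖M‖` is spent on applying `M` to the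
residual, the other on `‖s‖ = ‖M (M⁻¹ s)‖`.
-/

theorem norm_image_sub_le_mul_max_of_norm_hasFDerivWithin_sub_le {E F : Type*}
    [NormedAddCommGroup E] [NormedSpace ℝ E] [NormedAddCommGroup F] [NormedSpace ℝ F]
    {s : Set E} (hs : Convex ℝ s) {f : E → F} {f' : E → E →L[ℝ] F} {A : E →L[ℝ] F}
    {c x y : E} {L : ℝ} (hL : 0 ≤ L) (hf : ∀ u ∈ s, HasFDerivWithinAt f (f' u) s u)
    (hA : ∀ u ∈ s, ‖f' u - A‖ ≤ L * ‖u - c‖) (hx : x ∈ s) (hy : y ∈ s) :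
    ‖f y - f x - A (y - x)‖ ≤ L * max ‖x - c‖ ‖y - c‖ * ‖y - x‖ := by
  set R := max ‖x - c‖ ‖y - c‖
  have hbound : ∀ u ∈ s ∩ Metric.closedBall c R, ‖f' u - A‖ ≤ L * R := fun u hu ↦
    (hA u hu.1).trans (mul_le_mul_of_nonneg_left (mem_closedBall_iff_norm.1 hu.2) hL)
  exact (hs.inter (convex_closedBall c R)).norm_image_sub_le_of_norm_hasFDerivWithin_le'
    (fun u hu ↦ (hf u hu.1).mono Set.inter_subset_left) hbound
    ⟨hx, mem_closedBall_iff_norm.2 (le_max_left _ _)⟩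
    ⟨hy, mem_closedBall_iff_norm.2 (le_max_right _ _)⟩

theorem norm_apply_le_mul_sq_opNorm_mul_norm {𝕜 E F : Type*} [NontriviallyNormedField 𝕜]
    [SeminormedAddCommGroup E] [NormedSpace 𝕜 E] [SeminormedAddCommGroup F] [NormedSpace 𝕜 F]
    (M : E →L[𝕜] F) {C : ℝ} (hC : 0 ≤ C) {r q : E} (hrq : ‖r‖ ≤ C * ‖M q‖) :
    ‖M r‖ ≤ C * ‖M‖ ^ 2 * ‖q‖ :=
  calc ‖M r‖ ≤ ‖M‖ * (C * ‖M q‖) := M.le_opNorm_of_le hrq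
    _ ≤ ‖M‖ * (C * (‖M‖ * ‖q‖)) := by gcongr; exact M.le_opNorm q
    _ = C * ‖M‖ ^ 2 * ‖q‖ := by ring

section InnerProductSpace

variable {E : Type*} [NormedAddCommGroup E] [InnerProductSpace ℝ E] {A M : E →L[ℝ] E} {μ : ℝ}

theorem sq_opNorm_le_inv_of_isSymmetric_of_mul_mul_eq_one (hμ : 0 < μ)
    (hA : ∀ v, μ * ‖v‖ ^ 2 ≤ ⟪v, A v⟫) (hM : (M : E →ₗ[ℝ] E).IsSymmetric)
    (hMAM : M * A * M = 1) : ‖M‖ ^ 2 ≤ μ⁻¹ := by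
  have hnorm_sq_le (v : E) : μ * ‖M v‖ ^ 2 ≤ ‖v‖ ^ 2 :=
    calc μ * ‖M v‖ ^ 2 ≤ ⟪M v, A (M v)⟫ := hA (M v)
      _ = ⟪v, (M * A * M) v⟫ := hM v (A (M v))
      _ = ‖v‖ ^ 2 := by rw [hMAM, one_apply_eq_self, real_inner_self_eq_norm_sq]
  have hM_le : ‖M‖ ≤ √μ⁻¹ := M.opNorm_le_bound (Real.sqrt_nonneg _) fun v ↦ by
    rw [← Real.sqrt_sq (norm_nonneg v), ← Real.sqrt_mul (inv_nonneg.2 hμ.le)]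
    exact Real.le_sqrt_of_sq_le ((le_inv_mul_iff₀ hμ).2 (hnorm_sq_le v))
  exact (Real.le_sqrt (norm_nonneg M) (inv_nonneg.2 hμ.le)).1 hM_le

theorem stmt3_general {N : E →L[ℝ] E} {s : Set E} (hs : Convex ℝ s) {f : E → E}
    {f' : E → E →L[ℝ] E} (hf : ∀ x ∈ s, HasFDerivWithinAt f (f' x) s x)
    (hμ : 0 < μ) (hA : ∀ v, μ * ‖v‖ ^ 2 ≤ ⟪v, A v⟫) {L : ℝ} (hL : 0 ≤ L) {xstar : E}
    (hLip : ∀ x ∈ s, ‖f' x - A‖ ≤ L * ‖x - xstar‖) (hM : (M : E →ₗ[ℝ] E).IsSymmetric)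
    (hMAM : M * A * M = 1) (hMN : M * N = 1) {z zp : E} (hz : z ∈ s) (hzp : zp ∈ s) :
    ‖M (f zp - f z) - N (zp - z)‖ ≤
      L / μ * max ‖z - xstar‖ ‖zp - xstar‖ * ‖N (zp - z)‖ := by
  have hN : M * A = N := left_inv_eq_right_inv hMAM hMN
  have hresidual : ‖f zp - f z - A (zp - z)‖ ≤
      L * max ‖z - xstar‖ ‖zp - xstar‖ * ‖M (N (zp - z))‖ := by
    rw [← mul_apply_eq_comp, hMN, one_apply_eq_self]
    exact norm_image_sub_le_mul_max_of_norm_hasFDerivWithin_sub_le hs hL hf hLip hz hzp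
  calc ‖M (f zp - f z) - N (zp - z)‖ = ‖M (f zp - f z - A (zp - z))‖ := by
        rw [← hN, mul_apply_eq_comp, map_sub M (f zp - f z)]
    _ ≤ L * max ‖z - xstar‖ ‖zp - xstar‖ * ‖M‖ ^ 2 * ‖N (zp - z)‖ :=
        norm_apply_le_mul_sq_opNorm_mul_norm M (by positivity) hresidual
    _ ≤ L * max ‖z - xstar‖ ‖zp - xstar‖ * μ⁻¹ * ‖N (zp - z)‖ := by
        gcongr
        exact sq_opNorm_le_inv_of_isSymmetric_of_mul_mul_eq_one hμ hA hM hMAM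
    _ = L / μ * max ‖z - xstar‖ ‖zp - xstar‖ * ‖N (zp - z)‖ := by ring

end InnerProductSpace

/-- for a strongly convex `g` with Lipschitz Hessian and
`M = ∇²g(x*)^{-1/2}`, the secant pair `(s, y)` satisfies
`‖My − M⁻¹s‖ ≤ (L̃/μ)·max{‖z − x*‖, ‖z⁺ − x*‖}·‖M⁻¹s‖`. -/
theorem stmt3 (p : ℕ) (hp : 1 ≤ p) (g : Vec p → ℝ) (H : Vec p → Mat p)
    (hg : ContDiff ℝ 2 g) (hH : HasHessian g H)
    (μ : ℝ) (hμ : 0 < μ)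
    (hstrong : ∀ x : Vec p, ∀ v : Vec p, μ * ‖v‖^2 ≤ ⟪v, applyM (H x) v⟫)
    (Ltil : ℝ) (hLtil : 0 < Ltil)
    (hLip : ∀ u v : Vec p, opNorm (H u - H v) ≤ Ltil * ‖u - v‖)
    (xstar : Vec p) (M : Mat p)
    (hMdef : M.PosDef ∧ M * H xstar * M = 1) :
    ∀ z zp : Vec p, zp - z ≠ 0 →
      ‖applyM M (gradient g zp - gradient g z) - applyM M⁻¹ (zp - z)‖ ≤
        (Ltil / μ) * max ‖z - xstar‖ ‖zp - xstar‖ * ‖applyM M⁻¹ (zp - z)‖ := by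
  have hMdet : IsUnit M.det := M.isUnit_det_of_left_inverse hMdef.2
  intro z zp _
  exact stmt3_general convex_univ (fun x _ ↦ (hH x).hasFDerivWithinAt) hμ (hstrong xstar) hLtil.le
    (fun x _ ↦ by simpa only [opNorm, map_sub] using hLip x xstar)
    (hMdef.1.isHermitian.isSelfAdjoint.map toEuclideanCLM).isSymmetric
    (by rw [← map_mul, ← map_mul, hMdef.2, map_one])
    (by rw [← map_mul, M.mul_nonsing_inv hMdet, map_one]) (Set.mem_univ z) (Set.mem_univ zp)

end
end

section
/- Let p, n ≥ 1 and let each f_i : ℝ^p → ℝ (i = 1,…,n) be twice continuously differentiable with L̃-Lipschitz Hessians, and let x* ∈ ℝ^p satisfy (1/n)Σ_{i=1}^n ∇f_i(x*) = 0. Let z_1,…,z_n ∈ ℝ^p and let B_1,…,B_n ∈ ℝ^{p×p} be matrices such that (1/n)Σ_{i=1}^n B_i is invertible, and set Γ = ‖((1/n)Σ_{i=1}^n B_i)⁻¹‖ (operator norm) and x⁺ = ((1/n)Σ_{i=1}^n B_i)⁻¹ [ (1/n)Σ_{i=1}^n B_i z_i − (1/n)Σ_{i=1}^n ∇f_i(z_i)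 ]. Then ‖x⁺ − x*‖ ≤ (L̃Γ/n) Σ_{i=1}^n ‖z_i − x*‖² + (Γ/n) Σ_{i=1}^n ‖(B_i − ∇²f_i(x*))(z_i − x*)‖. -/
open Matrix Filter RealInnerProductSpace

noncomputable section

/-!
Let `A` be the inverse of the averaged matrix. Since the averaged gradient vanishes at `x*`, the
error `x⁺ - x*` is `A` applied to the average of `Bᵢ (zᵢ - x*) - (∇fᵢ(zᵢ) - ∇fᵢ(x*))`. Each of these
vectors is `(Bᵢ - ∇²fᵢ(x*)) (zᵢ - x*)` minus the first-order Taylor remainder of `∇fᵢ` at `x*`, and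
the mean value inequality along the segment from `x*` to `zᵢ` bounds that remainder by
`L ‖zᵢ - x*‖²`.
-/

theorem toEuclideanCLM_nonsing_inv_comp {m 𝕜 : Type*} [Fintype m] [DecidableEq m] [RCLike 𝕜]
    {M : Matrix m m 𝕜} (hM : IsUnit M) :
    toEuclideanCLM (𝕜 := 𝕜) M⁻¹ ∘L toEuclideanCLM (𝕜 := 𝕜) M = .id 𝕜 (EuclideanSpace 𝕜 m) := by
  change toEuclideanCLM (𝕜 := 𝕜) M⁻¹ * toEuclideanCLM (𝕜 := 𝕜) M = 1
  rw [← map_mul, nonsing_inv_mul M (M.isUnit_iff_isUnit_det.1 hM), map_one]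

theorem quasiNewton_step_sub_eq {ι R M N : Type*} [Fintype ι] [Ring R] [AddCommGroup M] [Module R M]
    [AddCommGroup N] [Module R N] {w : ι → R} {B : ι → M →ₗ[R] N} {A : N →ₗ[R] M} {x : M}
    (hA : A (∑ i, w i • B i x) = x) {g : ι → M → N} (hx : ∑ i, w i • g i x = 0) (z : ι → M) :
    A (∑ i, w i • B i (z i) - ∑ i, w i • g i (z i)) - x =
      A (∑ i, w i • (B i (z i - x) - (g i (z i) - g i x))) := by
  simp only [map_sub, smul_sub, Finset.sum_sub_distrib, hx, hA, sub_zero]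
  abel

section NormedSpace

variable {E F : Type*} [NormedAddCommGroup E] [NormedSpace ℝ E]
  [NormedAddCommGroup F] [NormedSpace ℝ F]

theorem norm_image_sub_sub_le_of_starConvex {s : Set E} {x z : E} (hs : StarConvex ℝ x s)
    (hz : z ∈ s) {g : E → F} {g' : E → E →L[ℝ] F}
    (hg : ∀ u ∈ s, HasFDerivWithinAt g (g' u) s u) {L : ℝ}
    (hL : ∀ u ∈ s, ‖g' u - g' x‖ ≤ L * ‖u - x‖) :
    ‖g z - g x - g' x (z - x)‖ ≤ L * ‖z - x‖ ^ 2 := by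
  have segment_subset : segment ℝ x z ⊆ s := hs.segment_subset hz
  have norm_deriv_sub_le : ∀ u ∈ segment ℝ x z, ‖g' u - g' x‖ ≤ L * ‖z - x‖ := by
    intro u hu
    refine (hL u (segment_subset hu)).trans ?_
    rw [segment_eq_image'] at hu
    obtain ⟨t, ⟨ht₀, ht₁⟩, rfl⟩ := hu
    calc L * ‖x + t • (z - x) - x‖ = t * (L * ‖z - x‖) := by
          rw [add_sub_cancel_left, norm_smul, Real.norm_of_nonneg ht₀, mul_left_comm]
      _ ≤ L * ‖z - x‖ := mul_le_of_le_one_left ((norm_nonneg _).trans (hL z hz)) ht₁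
  calc ‖g z - g x - g' x (z - x)‖ ≤ L * ‖z - x‖ * ‖z - x‖ :=
        (convex_segment x z).norm_image_sub_le_of_norm_hasFDerivWithin_le'
          (fun u hu ↦ (hg u (segment_subset hu)).mono segment_subset) norm_deriv_sub_le
          (left_mem_segment ℝ x z) (right_mem_segment ℝ x z)
    _ = L * ‖z - x‖ ^ 2 := by rw [mul_assoc, ← sq]

theorem norm_apply_sub_image_sub_le_of_starConvex {s : Set E} {x z : E} (hs : StarConvex ℝ x s)
    (hz : z ∈ s) {g : E → F} {g' : E → E →L[ℝ] F}
    (hg : ∀ u ∈ s, HasFDerivWithinAt g (g' u) s u) {L : ℝ}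
    (hL : ∀ u ∈ s, ‖g' u - g' x‖ ≤ L * ‖u - x‖) (B : E →L[ℝ] F) :
    ‖B (z - x) - (g z - g x)‖ ≤ ‖(B - g' x) (z - x)‖ + L * ‖z - x‖ ^ 2 := by
  have split : B (z - x) - (g z - g x) =
      (B - g' x) (z - x) - (g z - g x - g' x (z - x)) := by
    rw [_root_.sub_apply]
    abel
  rw [split]
  exact norm_sub_le_of_le le_rfl (norm_image_sub_sub_le_of_starConvex hs hz hg hL)

theorem stmt4_general {ι : Type*} [Fintype ι] {s : Set E} {x : E} (hs : StarConvex ℝ x s)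
    {g : ι → E → F} {g' : ι → E → E →L[ℝ] F}
    (hg : ∀ i, ∀ u ∈ s, HasFDerivWithinAt (g i) (g' i u) s u) {L : ℝ}
    (hL : ∀ i, ∀ u ∈ s, ‖g' i u - g' i x‖ ≤ L * ‖u - x‖)
    {w : ι → ℝ} (hw : ∀ i, 0 ≤ w i) (hx : ∑ i, w i • g i x = 0)
    {z : ι → E} (hz : ∀ i, z i ∈ s) {B : ι → E →L[ℝ] F} {A : F →L[ℝ] E}
    (hA : A ∘L ∑ i, w i • B i = .id ℝ E) :
    ‖A (∑ i, w i • B i (z i) - ∑ i, w i • g i (z i)) - x‖ ≤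
      L * ‖A‖ * ∑ i, w i * ‖z i - x‖ ^ 2
        + ‖A‖ * ∑ i, w i * ‖(B i - g' i x) (z i - x)‖ := by
  have apply_sum_eq : A (∑ i, w i • B i x) = x := by simpa using congr($hA x)
  have error_eq : A (∑ i, w i • B i (z i) - ∑ i, w i • g i (z i)) - x =
      A (∑ i, w i • (B i (z i - x) - (g i (z i) - g i x))) :=
    quasiNewton_step_sub_eq (A := (A : F →ₗ[ℝ] E)) (B := fun i ↦ (B i : E →ₗ[ℝ] F))
      apply_sum_eq hx z
  have norm_summand_le (i : ι) : ‖w i • (B i (z i - x) - (g i (z i) - g i x))‖ ≤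
      w i * (‖(B i - g' i x) (z i - x)‖ + L * ‖z i - x‖ ^ 2) := by
    rw [norm_smul, Real.norm_of_nonneg (hw i)]
    exact mul_le_mul_of_nonneg_left
      (norm_apply_sub_image_sub_le_of_starConvex hs (hz i) (hg i) (hL i) (B i)) (hw i)
  calc ‖A (∑ i, w i • B i (z i) - ∑ i, w i • g i (z i)) - x‖
      ≤ ‖A‖ * ∑ i, w i * (‖(B i - g' i x) (z i - x)‖ + L * ‖z i - x‖ ^ 2) := by
        rw [error_eq]
        exact A.le_opNorm_of_le (norm_sum_le_of_le _ fun i _ ↦ norm_summand_le i)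
    _ = L * ‖A‖ * ∑ i, w i * ‖z i - x‖ ^ 2
          + ‖A‖ * ∑ i, w i * ‖(B i - g' i x) (z i - x)‖ := by
        simp only [mul_add, Finset.sum_add_distrib, mul_left_comm _ L, ← Finset.mul_sum]
        ring

end NormedSpace

/-- Lemma 2 of the paper: the IQN-type iterate `x⁺` satisfies
`‖x⁺ − x*‖ ≤ (L̃Γ/n) Σᵢ ‖zᵢ − x*‖² + (Γ/n) Σᵢ ‖(Bᵢ − ∇²fᵢ(x*))(zᵢ − x*)‖`. -/
theorem stmt4 (p n : ℕ) (hp : 1 ≤ p) (hn : 1 ≤ n)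
    (f : Fin n → Vec p → ℝ) (H : Fin n → Vec p → Mat p)
    (hf : ∀ i, ContDiff ℝ 2 (f i)) (hH : ∀ i, HasHessian (f i) (H i))
    (Ltil : ℝ) (hLtil : 0 < Ltil)
    (hLip : ∀ i, ∀ u v : Vec p, opNorm (H i u - H i v) ≤ Ltil * ‖u - v‖)
    (xstar : Vec p) (hopt : (n : ℝ)⁻¹ • ∑ i, gradient (f i) xstar = 0)
    (z : Fin n → Vec p) (B : Fin n → Mat p)
    (hinv : IsUnit ((n : ℝ)⁻¹ • ∑ i, B i)) :
    ‖applyM ((n : ℝ)⁻¹ • ∑ i, B i)⁻¹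
        ((n : ℝ)⁻¹ • ∑ i, applyM (B i) (z i) - (n : ℝ)⁻¹ • ∑ i, gradient (f i) (z i))
      - xstar‖ ≤
      (Ltil * opNorm ((n : ℝ)⁻¹ • ∑ i, B i)⁻¹ / n) * ∑ i, ‖z i - xstar‖^2
      + (opNorm ((n : ℝ)⁻¹ • ∑ i, B i)⁻¹ / n) *
          ∑ i, ‖applyM (B i - H i xstar) (z i - xstar)‖ := by
  simpa [applyM, opNorm, Finset.smul_sum, Finset.mul_sum, div_eq_mul_inv, mul_assoc] using
    stmt4_general (starConvex_univ xstar) (fun i u _ ↦ (hH i u).hasFDerivWithinAt)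
    (fun i u _ ↦ by simpa [opNorm] using hLip i u xstar)
    (fun _ ↦ by positivity : ∀ _, 0 ≤ (n : ℝ)⁻¹)
    (by simpa [Finset.smul_sum] using hopt) (fun i ↦ Set.mem_univ (z i))
    (by simpa [Finset.smul_sum] using toEuclideanCLM_nonsing_inv_comp hinv)

end
end

section
/- Consider the IQN setup and iteration. For any r ∈ (0,1) there exist positive constants ε(r) and δ(r) such that: if ‖x⁰ − x*‖ < ε(r) and ‖B_i⁰ − ∇²f_i(x*)‖_{M_i} < δ(r) for M_i = ∇²f_i(x*)^{−1/2} and every i = 1,…,n, then for all t ≥ 1 the iterates satisfy ‖x^t − x*‖ ≤ r^{⌊(t−1)/n⌋+1} ‖x⁰ − x*‖, and moreover there is a constant C > 0 such that ‖B_i^t‖ ≤ C and ‖(B_i^t)⁻¹‖ ≤ C for all i and all t (in particular every B_i^t is invertible). -/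
open Matrix Filter RealInnerProductSpace

noncomputable section

/-- Frobenius norm of a matrix. -/
def frobNorm {p : ℕ} (A : Mat p) : ℝ := Real.sqrt (∑ i, ∑ j, (A i j)^2)

/-- Weighted matrix norm ‖A‖_M = ‖M A M‖_F. -/
def wNorm {p : ℕ} (M A : Mat p) : ℝ := frobNorm (M * A * M)

/-- Underlying function of a Euclidean vector. -/
def toFn {p : ℕ} (v : Vec p) : Fin p → ℝ := (WithLp.equiv 2 (Fin p → ℝ)) v

/-- Outer product a bᵀ. -/
def outer {p : ℕ} (a b : Vec p) : Mat p := Matrix.vecMulVec (toFn a) (toFn b)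

/-- Bilinear form uᵀ B v. -/
def quadForm {p : ℕ} (B : Mat p) (u v : Vec p) : ℝ := toFn u ⬝ᵥ B.mulVec (toFn v)

/-- Dot product aᵀ b. -/
def dotV {p : ℕ} (a b : Vec p) : ℝ := toFn a ⬝ᵥ toFn b

/-- The BFGS update  B⁺ = B + yyᵀ/(yᵀs) − B s sᵀ B/(sᵀ B s). -/
def bfgsUpdate {p : ℕ} (B : Mat p) (s y : Vec p) : Mat p :=
  B + (dotV y s)⁻¹ • outer y y - (quadForm B s s)⁻¹ • (B * outer s s * B)

/-- The cyclic index `i_t = (t mod n) + 1` (0-indexed: `t mod n`). -/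
def cyc {n : ℕ} (hn : 1 ≤ n) (t : ℕ) : Fin n := ⟨t % n, Nat.mod_lt t hn⟩

/-- The IQN problem data: `n` twice continuously differentiable sample functions
`f i : ℝ^p → ℝ`, `μ`-strongly convex with `L`-Lipschitz gradients and `L̃`-Lipschitz
Hessians, and the optimizer `x*` of `f = (1/n) Σ f i`. -/
structure IQNProblem (p n : ℕ) where
  hp : 1 ≤ p
  hn : 1 ≤ n
  f : Fin n → Vec p → ℝ
  Hess : Fin n → Vec p → Mat p
  mu : ℝ
  Lg : ℝ
  Ltil : ℝ
  xstar : Vec p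
  hmu : 0 < mu
  hmuL : mu ≤ Lg
  hLtil : 0 < Ltil
  hC2 : ∀ i, ContDiff ℝ 2 (f i)
  hHess : ∀ i, HasHessian (f i) (Hess i)
  hlow : ∀ i, ∀ x xh : Vec p,
    mu * ‖x - xh‖^2 ≤ ⟪gradient (f i) x - gradient (f i) xh, x - xh⟫
  hup : ∀ i, ∀ x xh : Vec p,
    ⟪gradient (f i) x - gradient (f i) xh, x - xh⟫ ≤ Lg * ‖x - xh‖^2
  hLip : ∀ i, ∀ u v : Vec p, opNorm (Hess i u - Hess i v) ≤ Ltil * ‖u - v‖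
  hopt : gradient (fun x => (n : ℝ)⁻¹ * ∑ i, f i x) xstar = 0
  hmin : ∀ x : Vec p, (n : ℝ)⁻¹ * ∑ i, f i xstar ≤ (n : ℝ)⁻¹ * ∑ i, f i x

/-- A run of the IQN iteration: sequences `x^t`, `z_i^t` and symmetric matrices `B_i^t`
following the IQN update with cyclic index, all steps assumed well defined. -/
structure IQNState {p n : ℕ} (P : IQNProblem p n) where
  x : ℕ → Vec p
  z : Fin n → ℕ → Vec p
  B : Fin n → ℕ → Mat p
  hz0 : ∀ i, z i 0 = x 0
  hsym : ∀ i t, (B i t).IsSymm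
  hinv : ∀ t, IsUnit ((n : ℝ)⁻¹ • ∑ i, B i t)
  hx : ∀ t, x (t+1) = applyM ((n : ℝ)⁻¹ • ∑ i, B i t)⁻¹
      ((n : ℝ)⁻¹ • ∑ i, applyM (B i t) (z i t) - (n : ℝ)⁻¹ • ∑ i, gradient (P.f i) (z i t))
  hzupd : ∀ t, z (cyc P.hn t) (t+1) = x (t+1)
  hzfix : ∀ t, ∀ j, j ≠ cyc P.hn t → z j (t+1) = z j t
  hs : ∀ t, z (cyc P.hn t) (t+1) - z (cyc P.hn t) t ≠ 0
  hys : ∀ t, dotV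
      (gradient (P.f (cyc P.hn t)) (z (cyc P.hn t) (t+1)) -
        gradient (P.f (cyc P.hn t)) (z (cyc P.hn t) t))
      (z (cyc P.hn t) (t+1) - z (cyc P.hn t) t) ≠ 0
  hsBs : ∀ t, quadForm (B (cyc P.hn t) t)
      (z (cyc P.hn t) (t+1) - z (cyc P.hn t) t)
      (z (cyc P.hn t) (t+1) - z (cyc P.hn t) t) ≠ 0
  hBupd : ∀ t, B (cyc P.hn t) (t+1) = bfgsUpdate (B (cyc P.hn t) t)
      (z (cyc P.hn t) (t+1) - z (cyc P.hn t) t)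
      (gradient (P.f (cyc P.hn t)) (z (cyc P.hn t) (t+1)) -
        gradient (P.f (cyc P.hn t)) (z (cyc P.hn t) t))
  hBfix : ∀ t, ∀ j, j ≠ cyc P.hn t → B j (t+1) = B j t

/-!
Matrices are measured in coordinates in which the Hessian `H` at the solution is the identity: with
`M = H ^ (-1/2)`, the BFGS update of `B` with the pair `(s, y)` becomes the update of `M B M` with
`(M⁻¹ s, M y)`, and `‖B - H‖_M = ‖M B M - 1‖_F`. There an exact secant pair `y = s` does not
increase the Frobenius distance to `1`, and a relative error `τ` of the pair costs at most `7 τ`.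

A secant pair inside the ball of radius `ρ` about the solution has relative error `O(ρ)`. As long as
the matrices stay close to the Hessians, an IQN step contracts the largest error of the `n` stored
points by the factor `r`. So the `k`-th update of a component takes place at distance `O(r ^ k)`,
the deterioration of its matrix is bounded by a geometric series, and both error bounds propagate
by a simultaneous induction.
-/

section Matrices

variable {p : ℕ}

lemma dotV_eq_inner (a b : Vec p) : dotV a b = ⟪a, b⟫ := by
  simp [dotV, toFn, dotProduct, PiLp.inner_apply, mul_comm]

lemma quadForm_eq_inner (B : Mat p) (u v : Vec p) : quadForm B u v = ⟪u, applyM B v⟫ := by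
  rw [applyM, Matrix.inner_toEuclideanCLM]
  rfl

@[simp]
lemma applyM_one (v : Vec p) : applyM 1 v = v := by
  simp [applyM]

lemma applyM_mul (A B : Mat p) (v : Vec p) : applyM (A * B) v = applyM A (applyM B v) := by
  simp [applyM]

lemma applyM_matrix_sub (A B : Mat p) (v : Vec p) :
    applyM (A - B) v = applyM A v - applyM B v := by
  simp [applyM]

lemma applyM_sub (A : Mat p) (v w : Vec p) : applyM A (v - w) = applyM A v - applyM A w := by
  simp [applyM]

lemma applyM_smul_sum {ι : Type*} [Fintype ι] (c : ℝ) (A : ι → Mat p) (v : Vec p) :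
    applyM (c • ∑ i, A i) v = c • ∑ i, applyM (A i) v := by
  simp [applyM]

lemma applyM_applyM_inv {M : Mat p} (hM : IsUnit M.det) (v : Vec p) :
    applyM M (applyM M⁻¹ v) = v := by
  rw [← applyM_mul, Matrix.mul_nonsing_inv M hM, applyM_one]

lemma inner_applyM_eq_inner_transpose (A : Mat p) (u v : Vec p) :
    ⟪u, applyM A v⟫ = ⟪applyM Aᵀ u, v⟫ := by
  rw [← quadForm_eq_inner, real_inner_comm, ← quadForm_eq_inner, quadForm, quadForm,
    Matrix.dotProduct_mulVec, ← Matrix.mulVec_transpose, dotProduct_comm]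

lemma mul_outer (A : Mat p) (a b : Vec p) : A * outer a b = outer (applyM A a) b :=
  Matrix.mul_vecMulVec _ _ _

lemma outer_mul (A : Mat p) (a b : Vec p) : outer a b * A = outer a (applyM Aᵀ b) := by
  rw [outer, Matrix.vecMulVec_mul, ← Matrix.mulVec_transpose]
  rfl

lemma outer_transpose (a b : Vec p) : (outer a b)ᵀ = outer b a :=
  Matrix.transpose_vecMulVec _ _

lemma trace_outer (a b : Vec p) : (outer a b).trace = ⟪a, b⟫ := by
  rw [outer, Matrix.trace_vecMulVec, ← dotV_eq_inner]
  rfl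

lemma applyM_outer (a b v : Vec p) : applyM (outer a b) v = ⟪b, v⟫ • a := by
  ext i
  rw [← dotV_eq_inner, applyM, Matrix.ofLp_toEuclideanCLM, outer, Matrix.vecMulVec_mulVec]
  simp [dotV, toFn, mul_comm]

lemma outer_add_left (a b c : Vec p) : outer (a + b) c = outer a c + outer b c :=
  Matrix.add_vecMulVec _ _ _

lemma outer_add_right (a b c : Vec p) : outer a (b + c) = outer a b + outer a c :=
  Matrix.vecMulVec_add _ _ _

lemma posDef_of_inner_applyM_pos {A : Mat p} (hA : A.IsSymm)
    (hpos : ∀ v, v ≠ 0 → 0 < ⟪v, applyM A v⟫) : A.PosDef := by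
  refine .of_dotProduct_mulVec_pos (Matrix.isHermitian_iff_isSymm.2 hA) fun v hv => ?_
  have := hpos (WithLp.toLp 2 v) (by simpa using hv)
  rwa [← quadForm_eq_inner] at this

lemma inner_applyM_pos {A : Mat p} (hA : A.PosDef) {v : Vec p} (hv : v ≠ 0) :
    0 < ⟪v, applyM A v⟫ := by
  rw [← quadForm_eq_inner]
  exact hA.dotProduct_mulVec_pos (x := toFn v) (by simpa [toFn] using hv)

lemma inner_applyM_sq_le {A : Mat p} (hA : A.PosDef) (u v : Vec p) :
    ⟪u, applyM A v⟫ ^ 2 ≤ ⟪u, applyM A u⟫ * ⟪v, applyM A v⟫ := by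
  have hsymm : ⟪v, applyM A u⟫ = ⟪u, applyM A v⟫ := by
    rw [inner_applyM_eq_inner_transpose, Matrix.isHermitian_iff_isSymm.1 hA.isHermitian,
      real_inner_comm]
  have hform : ∀ a b, Matrix.toBilin' A (toFn a) (toFn b) = ⟪a, applyM A b⟫ := fun a b => by
    rw [← quadForm_eq_inner, Matrix.toBilin'_apply', quadForm]
  have hcs := (Matrix.toBilin' A).apply_mul_apply_le_of_forall_zero_le
    (fun w => by
      simpa [Matrix.toBilin'_apply'] using hA.posSemidef.dotProduct_mulVec_nonneg w)
    (toFn u) (toFn v)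
  rwa [hform, hform, hform, hform, hsymm, ← sq] at hcs

lemma opNorm_nonneg (A : Mat p) : 0 ≤ opNorm A := norm_nonneg _

lemma opNorm_add_le (A B : Mat p) : opNorm (A + B) ≤ opNorm A + opNorm B := by
  simpa only [opNorm, map_add] using norm_add_le _ _

lemma opNorm_mul_le (A B : Mat p) : opNorm (A * B) ≤ opNorm A * opNorm B := by
  simpa only [opNorm, map_mul] using norm_mul_le _ _

lemma opNorm_one_le : opNorm (1 : Mat p) ≤ 1 := by
  rw [opNorm, map_one]
  exact ContinuousLinearMap.norm_id_le

lemma norm_applyM_le (A : Mat p) (v : Vec p) : ‖applyM A v‖ ≤ opNorm A * ‖v‖ :=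
  ContinuousLinearMap.le_opNorm _ _

lemma opNorm_le_of_norm_applyM_le {A : Mat p} {C : ℝ} (hC : 0 ≤ C)
    (h : ∀ v, ‖applyM A v‖ ≤ C * ‖v‖) : opNorm A ≤ C :=
  ContinuousLinearMap.opNorm_le_bound _ hC h

lemma norm_le_opNorm_mul_norm_applyM_inv {M : Mat p} (hM : IsUnit M.det) (v : Vec p) :
    ‖v‖ ≤ opNorm M * ‖applyM M⁻¹ v‖ := by
  simpa only [applyM_applyM_inv hM] using norm_applyM_le M (applyM M⁻¹ v)

lemma isUnit_and_opNorm_inv_le_of_coercive {A : Mat p} {C : ℝ} (hC : 0 < C) (hA : A.IsSymm)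
    (hcoer : ∀ v, ‖v‖ ^ 2 ≤ C * ⟪v, applyM A v⟫) : IsUnit A ∧ opNorm A⁻¹ ≤ C := by
  have hunit : IsUnit A := by
    refine (posDef_of_inner_applyM_pos hA fun v hv => ?_).isUnit
    exact pos_of_mul_pos_right ((pow_pos (norm_pos_iff.2 hv) 2).trans_le (hcoer v)) hC.le
  refine ⟨hunit, opNorm_le_of_norm_applyM_le hC.le fun v => ?_⟩
  set w := applyM A⁻¹ v
  have hw : ‖w‖ * ‖w‖ ≤ C * ‖v‖ * ‖w‖ := calc
    ‖w‖ * ‖w‖ = ‖w‖ ^ 2 := (sq _).symm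
    _ ≤ C * ⟪w, v⟫ := by
      simpa only [w, applyM_applyM_inv ((Matrix.isUnit_iff_isUnit_det A).1 hunit)] using hcoer w
    _ ≤ C * (‖w‖ * ‖v‖) := by gcongr; exact real_inner_le_norm w v
    _ = C * ‖v‖ * ‖w‖ := by ring
  exact not_lt.1 fun hlt => hw.not_gt
    (mul_lt_mul_of_pos_right hlt ((by positivity : 0 ≤ C * ‖v‖).trans_lt hlt))

attribute [local instance] Matrix.frobeniusNormedAddCommGroup Matrix.frobeniusNormedSpace

lemma frobNorm_eq_norm (A : Mat p) : frobNorm A = ‖A‖ := by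
  simp [frobNorm, Matrix.frobenius_norm_def, Real.sqrt_eq_rpow]

lemma frobNorm_nonneg (A : Mat p) : 0 ≤ frobNorm A := Real.sqrt_nonneg _

lemma frobNorm_add_le (A B : Mat p) : frobNorm (A + B) ≤ frobNorm A + frobNorm B := by
  simpa only [frobNorm_eq_norm] using norm_add_le A B

lemma frobNorm_smul (c : ℝ) (A : Mat p) : frobNorm (c • A) = |c| * frobNorm A := by
  simpa only [frobNorm_eq_norm, Real.norm_eq_abs] using norm_smul c A

lemma frobNorm_sq (A : Mat p) : frobNorm A ^ 2 = ∑ i, ∑ j, A i j ^ 2 :=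
  Real.sq_sqrt (by positivity)

lemma frobNorm_sq_eq_trace (A : Mat p) : frobNorm A ^ 2 = (Aᵀ * A).trace := by
  rw [frobNorm_sq, Finset.sum_comm]
  simp [Matrix.trace, Matrix.mul_apply, sq]

lemma frobNorm_outer (a b : Vec p) : frobNorm (outer a b) = ‖a‖ * ‖b‖ := by
  rw [← sq_eq_sq₀ (frobNorm_nonneg _) (by positivity), frobNorm_sq_eq_trace, outer_transpose,
    outer_mul, outer_transpose, applyM_outer, trace_outer, real_inner_smul_right,
    real_inner_self_eq_norm_sq, real_inner_self_eq_norm_sq]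
  ring

lemma opNorm_le_frobNorm (A : Mat p) : opNorm A ≤ frobNorm A := by
  refine opNorm_le_of_norm_applyM_le (frobNorm_nonneg A) fun v => ?_
  rw [← sq_le_sq₀ (norm_nonneg _) (mul_nonneg (frobNorm_nonneg A) (norm_nonneg v)), mul_pow,
    frobNorm_sq, EuclideanSpace.real_norm_sq_eq, EuclideanSpace.real_norm_sq_eq, Finset.sum_mul]
  refine Finset.sum_le_sum fun i _ => ?_
  change (∑ j, A i j * v j) ^ 2 ≤ _
  exact Finset.sum_mul_sq_le_sq_mul_sq _ _ _

lemma frobNorm_sq_add_smul_outer_sub_smul_outer (A : Mat p) (α β : ℝ) (a b : Vec p) :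
    frobNorm (A + (α • outer a a - β • outer b b)) ^ 2 =
      frobNorm A ^ 2 + 2 * (α * ⟪a, applyM A a⟫ - β * ⟪b, applyM A b⟫) +
        ((α * ‖a‖ ^ 2) ^ 2 - 2 * (α * β) * ⟪a, b⟫ ^ 2 + (β * ‖b‖ ^ 2) ^ 2) := by
  have hflip : ∀ c, ⟪applyM Aᵀ c, c⟫ = ⟪c, applyM A c⟫ := fun c =>
    (inner_applyM_eq_inner_transpose A c c).symm
  have hflip' : ∀ c, ⟪c, applyM Aᵀ c⟫ = ⟪c, applyM A c⟫ := fun c => by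
    rw [real_inner_comm, hflip]
  simp only [frobNorm_sq_eq_trace, Matrix.transpose_add, Matrix.transpose_sub,
    Matrix.transpose_smul, outer_transpose, add_mul, mul_add, sub_mul, mul_sub, smul_mul_assoc,
    mul_smul_comm, Matrix.trace_add, Matrix.trace_sub, Matrix.trace_smul, mul_outer, outer_mul,
    trace_outer, applyM_outer, real_inner_smul_left, smul_eq_mul, hflip, hflip',
    real_inner_self_eq_norm_sq, real_inner_comm a b]
  ring

lemma one_sub_mul_norm_sq_le_inner_applyM (A : Mat p) (v : Vec p) :
    (1 - frobNorm (A - 1)) * ‖v‖ ^ 2 ≤ ⟪v, applyM A v⟫ := by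
  have hsplit : ⟪v, applyM A v⟫ = ‖v‖ ^ 2 + ⟪v, applyM (A - 1) v⟫ := by
    rw [applyM_matrix_sub, applyM_one, inner_sub_right, real_inner_self_eq_norm_sq]
    ring
  have herr : |⟪v, applyM (A - 1) v⟫| ≤ frobNorm (A - 1) * ‖v‖ ^ 2 := calc
    _ ≤ ‖v‖ * ‖applyM (A - 1) v‖ := abs_real_inner_le_norm _ _
    _ ≤ ‖v‖ * (frobNorm (A - 1) * ‖v‖) := by
      gcongr
      exact (norm_applyM_le _ v).trans (by gcongr; exact opNorm_le_frobNorm _)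
    _ = frobNorm (A - 1) * ‖v‖ ^ 2 := by ring
  linarith [neg_le_of_abs_le herr]

lemma posDef_of_frobNorm_sub_one_lt_one {A : Mat p} (hA : A.IsSymm)
    (hA1 : frobNorm (A - 1) < 1) : A.PosDef := by
  refine posDef_of_inner_applyM_pos hA fun v hv => ?_
  refine (mul_pos (sub_pos.2 hA1) ?_).trans_le (one_sub_mul_norm_sq_le_inner_applyM A v)
  exact pow_pos (norm_pos_iff.2 hv) 2

end Matrices

section BFGS

variable {p : ℕ}

lemma bfgsUpdate_eq_add_outer {B : Mat p} (hB : B.IsSymm) (s y : Vec p) :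
    bfgsUpdate B s y =
      B + (⟪y, s⟫⁻¹ • outer y y - ⟪s, applyM B s⟫⁻¹ • outer (applyM B s) (applyM B s)) := by
  rw [bfgsUpdate, mul_outer, outer_mul, hB.eq, quadForm_eq_inner, dotV_eq_inner, add_sub_assoc]

/- With `κ = ‖B s‖² / ⟪s, B s⟫`, the squared distance to `1` drops by
`(κ - 1)² + 2 (⟪B s, B (B s)⟫ / ⟪s, B s⟫ - κ²)`, and the second term is nonnegative by the
Cauchy–Schwarz inequality for the inner product defined by `B`. -/
lemma frobNorm_bfgsUpdate_self_sub_one_le {B : Mat p} (hB : B.PosDef) {s : Vec p} (hs : s ≠ 0) :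
    frobNorm (bfgsUpdate B s s - 1) ≤ frobNorm (B - 1) := by
  have hsymm : B.IsSymm := Matrix.isHermitian_iff_isSymm.1 hB.isHermitian
  set v := applyM B s with hv
  have hb : 0 < ⟪s, v⟫ := inner_applyM_pos hB hs
  have hcs : (‖v‖ ^ 2 / ⟪s, v⟫) ^ 2 ≤ ⟪v, applyM B v⟫ / ⟪s, v⟫ := by
    have h := inner_applyM_sq_le hB s v
    rw [inner_applyM_eq_inner_transpose, hsymm.eq, ← hv, real_inner_self_eq_norm_sq] at h
    rw [div_pow, div_le_div_iff₀ (pow_pos hb 2) hb]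
    nlinarith
  have hdrop : frobNorm (bfgsUpdate B s s - 1) ^ 2 = frobNorm (B - 1) ^ 2 -
      ((‖v‖ ^ 2 / ⟪s, v⟫ - 1) ^ 2 +
        2 * (⟪v, applyM B v⟫ / ⟪s, v⟫ - (‖v‖ ^ 2 / ⟪s, v⟫) ^ 2)) := by
    rw [bfgsUpdate_eq_add_outer hsymm, ← hv, add_sub_right_comm,
      frobNorm_sq_add_smul_outer_sub_smul_outer]
    simp only [applyM_matrix_sub, applyM_one, inner_sub_right, ← hv, real_inner_self_eq_norm_sq]
    field_simp
    ring
  rw [← sq_le_sq₀ (frobNorm_nonneg _) (frobNorm_nonneg _), hdrop]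
  nlinarith [sq_nonneg (‖v‖ ^ 2 / ⟪s, v⟫ - 1)]

lemma half_norm_sq_le_inner_of_norm_sub_le {E : Type*} [NormedAddCommGroup E]
    [InnerProductSpace ℝ E] {s y : E} (h : ‖y - s‖ ≤ ‖s‖ / 2) : ‖s‖ ^ 2 / 2 ≤ ⟪y, s⟫ := by
  have hsplit : ⟪y, s⟫ = ‖s‖ ^ 2 + ⟪y - s, s⟫ := by
    rw [inner_sub_left, real_inner_self_eq_norm_sq]
    ring
  have herr : |⟪y - s, s⟫| ≤ ‖s‖ / 2 * ‖s‖ := (abs_real_inner_le_norm _ _).trans (by gcongr)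
  linarith [neg_le_of_abs_le herr]

lemma smul_outer_add_sub_smul_outer {s d : Vec p} (hs : s ≠ 0) (hd : ⟪s + d, s⟫ ≠ 0) :
    ⟪s + d, s⟫⁻¹ • outer (s + d) (s + d) - ⟪s, s⟫⁻¹ • outer s s =
      ⟪s + d, s⟫⁻¹ • (outer (s + d) d + outer d s + (-(⟪d, s⟫ / ‖s‖ ^ 2)) • outer s s) := by
  have hs0 : ‖s‖ ≠ 0 := norm_ne_zero_iff.2 hs
  have hexp : outer (s + d) (s + d) = outer (s + d) d + outer d s + outer s s := by
    rw [outer_add_right, outer_add_left s d s]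
    abel
  have hcoeff : ⟪s, s⟫⁻¹ = ⟪s + d, s⟫⁻¹ * (1 + ⟪d, s⟫ / ‖s‖ ^ 2) := by
    rw [eq_inv_mul_iff_mul_eq₀ hd, inner_add_left, real_inner_self_eq_norm_sq]
    field_simp
  rw [hexp, hcoeff]
  module

lemma frobNorm_smul_outer_sub_smul_outer_le {s y : Vec p} (hs : s ≠ 0) {τ : ℝ} (hτ : τ ≤ 1 / 2)
    (h : ‖y - s‖ ≤ τ * ‖s‖) :
    frobNorm (⟪y, s⟫⁻¹ • outer y y - ⟪s, s⟫⁻¹ • outer s s) ≤ 7 * τ := by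
  have hs0 : 0 < ‖s‖ := norm_pos_iff.2 hs
  have hk : ‖s‖ ^ 2 / 2 ≤ ⟪y, s⟫ := half_norm_sq_le_inner_of_norm_sub_le (by nlinarith)
  have hk0 : 0 < ⟪y, s⟫ := (by positivity : 0 < ‖s‖ ^ 2 / 2).trans_le hk
  obtain ⟨d, rfl⟩ : ∃ d, y = s + d := ⟨y - s, by abel⟩
  rw [add_sub_cancel_left] at h
  have hτ0 : 0 ≤ τ := nonneg_of_mul_nonneg_left ((norm_nonneg d).trans h) hs0
  have hd : ‖d‖ * ‖s‖ ≤ τ * ‖s‖ ^ 2 := by nlinarith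
  have h₁ : frobNorm (outer (s + d) d) ≤ 3 / 2 * (τ * ‖s‖ ^ 2) := by
    have hsd : ‖s + d‖ ≤ 3 / 2 * ‖s‖ := (norm_add_le s d).trans (by nlinarith)
    calc frobNorm (outer (s + d) d) = ‖s + d‖ * ‖d‖ := frobNorm_outer _ _
      _ ≤ 3 / 2 * ‖s‖ * (τ * ‖s‖) := by gcongr
      _ = 3 / 2 * (τ * ‖s‖ ^ 2) := by ring
  have h₂ : frobNorm (outer d s) ≤ τ * ‖s‖ ^ 2 := (frobNorm_outer d s).trans_le hd
  have h₃ : frobNorm ((-(⟪d, s⟫ / ‖s‖ ^ 2)) • outer s s) ≤ τ * ‖s‖ ^ 2 := by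
    rw [frobNorm_smul, frobNorm_outer, abs_neg, abs_div, abs_sq, ← sq,
      div_mul_cancel₀ _ (pow_ne_zero 2 hs0.ne')]
    exact (abs_real_inner_le_norm d s).trans hd
  rw [smul_outer_add_sub_smul_outer hs hk0.ne', frobNorm_smul, abs_inv,
    abs_of_pos hk0, inv_mul_le_iff₀ hk0]
  calc _ ≤ frobNorm (outer (s + d) d) + frobNorm (outer d s) +
        frobNorm ((-(⟪d, s⟫ / ‖s‖ ^ 2)) • outer s s) :=
      (frobNorm_add_le _ _).trans (by gcongr; exact frobNorm_add_le _ _)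
    _ ≤ ‖s‖ ^ 2 / 2 * (7 * τ) := by linarith
    _ ≤ ⟪s + d, s⟫ * (7 * τ) := by gcongr

lemma frobNorm_bfgsUpdate_sub_one_le {B : Mat p} (hB : B.PosDef) {s y : Vec p} (hs : s ≠ 0)
    {τ : ℝ} (hτ : τ ≤ 1 / 2) (hy : ‖y - s‖ ≤ τ * ‖s‖) :
    frobNorm (bfgsUpdate B s y - 1) ≤ frobNorm (B - 1) + 7 * τ := by
  have hsplit : bfgsUpdate B s y - 1 =
      (bfgsUpdate B s s - 1) + (⟪y, s⟫⁻¹ • outer y y - ⟪s, s⟫⁻¹ • outer s s) := by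
    rw [bfgsUpdate, bfgsUpdate, dotV_eq_inner, dotV_eq_inner]
    abel
  rw [hsplit]
  exact (frobNorm_add_le _ _).trans (add_le_add (frobNorm_bfgsUpdate_self_sub_one_le hB hs)
    (frobNorm_smul_outer_sub_smul_outer_le hs hτ hy))

lemma isSymm_mul_mul {M B : Mat p} (hM : M.IsSymm) (hB : B.IsSymm) : (M * B * M).IsSymm := by
  rw [Matrix.IsSymm, Matrix.transpose_mul, Matrix.transpose_mul, hM.eq, hB.eq, mul_assoc]

lemma mul_bfgsUpdate_mul {M B : Mat p} (hM : M.IsSymm) (hMdet : IsUnit M.det) (hB : B.IsSymm)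
    (s y : Vec p) :
    M * bfgsUpdate B s y * M = bfgsUpdate (M * B * M) (applyM M⁻¹ s) (applyM M y) := by
  have hBs : applyM (M * B * M) (applyM M⁻¹ s) = applyM M (applyM B s) := by
    rw [applyM_mul, applyM_mul, applyM_applyM_inv hMdet]
  have hflip : ∀ u, ⟪applyM M u, applyM M⁻¹ s⟫ = ⟪u, s⟫ := fun u => by
    rw [real_inner_comm, inner_applyM_eq_inner_transpose, hM.eq, applyM_applyM_inv hMdet,
      real_inner_comm]
  rw [bfgsUpdate_eq_add_outer hB, bfgsUpdate_eq_add_outer (isSymm_mul_mul hM hB), hBs, hflip,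
    real_inner_comm (applyM M _) (applyM M⁻¹ s), hflip, real_inner_comm s (applyM B s)]
  simp only [mul_add, mul_sub, add_mul, sub_mul, mul_smul_comm, smul_mul_assoc, mul_outer,
    outer_mul, hM.eq]

end BFGS

section WeightedNorm

variable {p : ℕ}

lemma opNorm_le_opNorm_inv_sq_mul {M : Mat p} (hM : IsUnit M.det) (A : Mat p) :
    opNorm A ≤ opNorm M⁻¹ ^ 2 * opNorm (M * A * M) := by
  have hA : A = M⁻¹ * (M * A * M) * M⁻¹ := by
    rw [mul_assoc M, Matrix.nonsing_inv_mul_cancel_left _ _ hM,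
      Matrix.mul_nonsing_inv_cancel_right _ _ hM]
  calc opNorm A = opNorm (M⁻¹ * (M * A * M) * M⁻¹) := congrArg opNorm hA
    _ ≤ opNorm M⁻¹ * opNorm (M * A * M) * opNorm M⁻¹ :=
      (opNorm_mul_le _ _).trans
        (mul_le_mul_of_nonneg_right (opNorm_mul_le _ _) (opNorm_nonneg _))
    _ = opNorm M⁻¹ ^ 2 * opNorm (M * A * M) := by ring

lemma opNorm_le_opNorm_inv_sq_mul_wNorm {M : Mat p} (hM : IsUnit M.det) (A : Mat p) :
    opNorm A ≤ opNorm M⁻¹ ^ 2 * wNorm M A :=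
  (opNorm_le_opNorm_inv_sq_mul hM A).trans
    (mul_le_mul_of_nonneg_left (opNorm_le_frobNorm _) (sq_nonneg _))

/-- `M` is a symmetric square root of `H⁻¹`, as the weight `H ^ (-1/2)` is. The equation `M H M = 1`
makes `M` and `H` invertible, so that no inverse has to appear in the definition. -/
structure IsInvSqrt (M H : Mat p) : Prop where
  isSymm : M.IsSymm
  mul_mul_eq_one : M * H * M = 1

namespace IsInvSqrt

variable {M H B : Mat p}

lemma isUnit_det (h : IsInvSqrt M H) : IsUnit M.det :=
  Matrix.isUnit_det_of_left_inverse h.mul_mul_eq_one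

lemma inv_eq (h : IsInvSqrt M H) : M⁻¹ = M * H :=
  Matrix.inv_eq_left_inv h.mul_mul_eq_one

lemma wNorm_sub (h : IsInvSqrt M H) (B : Mat p) : wNorm M (B - H) = frobNorm (M * B * M - 1) := by
  rw [wNorm, mul_sub, sub_mul, h.mul_mul_eq_one]

lemma norm_sq_le_inner (h : IsInvSqrt M H) {κ : ℝ} (hκ : opNorm M ^ 2 ≤ κ)
    (hB : wNorm M (B - H) ≤ 1 / 2) (v : Vec p) : ‖v‖ ^ 2 ≤ 2 * κ * ⟪v, applyM B v⟫ := by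
  set w := applyM M⁻¹ v
  have hw : ⟪w, applyM (M * B * M) w⟫ = ⟪v, applyM B v⟫ := by
    rw [applyM_mul, applyM_mul, inner_applyM_eq_inner_transpose, h.isSymm.eq,
      applyM_applyM_inv h.isUnit_det]
  have hcoer : ‖w‖ ^ 2 ≤ 2 * ⟪v, applyM B v⟫ := by
    have := one_sub_mul_norm_sq_le_inner_applyM (M * B * M) w
    rw [hw, ← h.wNorm_sub] at this
    nlinarith [sq_nonneg ‖w‖]
  calc ‖v‖ ^ 2 ≤ (opNorm M * ‖w‖) ^ 2 := by
        gcongr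
        exact norm_le_opNorm_mul_norm_applyM_inv h.isUnit_det v
    _ ≤ κ * (2 * ⟪v, applyM B v⟫) := by rw [mul_pow]; gcongr; exact (sq_nonneg _).trans hκ
    _ = 2 * κ * ⟪v, applyM B v⟫ := by ring

lemma opNorm_le (h : IsInvSqrt M H) {κ : ℝ} (hκ : opNorm M⁻¹ ^ 2 ≤ κ)
    (hB : wNorm M (B - H) ≤ 1 / 2) : opNorm B ≤ 2 * κ := by
  have hMBM : opNorm (M * B * M) ≤ 2 := calc
    opNorm (M * B * M) = opNorm (1 + (M * B * M - 1)) := by rw [add_sub_cancel]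
    _ ≤ opNorm 1 + opNorm (M * B * M - 1) := opNorm_add_le _ _
    _ ≤ 1 + 1 / 2 := add_le_add opNorm_one_le
      ((opNorm_le_frobNorm _).trans (h.wNorm_sub B ▸ hB))
    _ ≤ 2 := by norm_num
  calc opNorm B ≤ opNorm M⁻¹ ^ 2 * opNorm (M * B * M) :=
        opNorm_le_opNorm_inv_sq_mul h.isUnit_det B
    _ ≤ κ * 2 := mul_le_mul hκ hMBM (opNorm_nonneg _) ((sq_nonneg _).trans hκ)
    _ = 2 * κ := mul_comm _ _

lemma wNorm_bfgsUpdate_sub_le (h : IsInvSqrt M H) (hB : B.IsSymm) (hBH : wNorm M (B - H) < 1)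
    {s y : Vec p} (hs : s ≠ 0) {κ τ : ℝ} (hκ : opNorm M ^ 2 ≤ κ) (hτ : 0 ≤ τ)
    (hκτ : κ * τ ≤ 1 / 2) (hy : ‖y - applyM H s‖ ≤ τ * ‖s‖) :
    wNorm M (bfgsUpdate B s y - H) ≤ wNorm M (B - H) + 7 * (κ * τ) := by
  have hs' : applyM M⁻¹ s ≠ 0 := fun h0 => hs <| by
    rw [← applyM_applyM_inv h.isUnit_det s, h0]
    exact map_zero _
  have hpair : ‖applyM M y - applyM M⁻¹ s‖ ≤ κ * τ * ‖applyM M⁻¹ s‖ := calc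
    _ = ‖applyM M (y - applyM H s)‖ := by rw [h.inv_eq, applyM_mul, ← applyM_sub]
    _ ≤ opNorm M * ‖y - applyM H s‖ := norm_applyM_le _ _
    _ ≤ opNorm M * (τ * (opNorm M * ‖applyM M⁻¹ s‖)) := by
      gcongr
      · exact opNorm_nonneg M
      · exact hy.trans (by gcongr; exact norm_le_opNorm_mul_norm_applyM_inv h.isUnit_det s)
    _ = opNorm M ^ 2 * τ * ‖applyM M⁻¹ s‖ := by ring
    _ ≤ κ * τ * ‖applyM M⁻¹ s‖ := by gcongr
  rw [h.wNorm_sub] at hBH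
  rw [h.wNorm_sub, h.wNorm_sub, mul_bfgsUpdate_mul h.isSymm h.isUnit_det hB]
  exact frobNorm_bfgsUpdate_sub_one_le
    (posDef_of_frobNorm_sub_one_lt_one (isSymm_mul_mul h.isSymm hB) hBH) hs' hκτ hpair

end IsInvSqrt

end WeightedNorm

section Estimates

lemma norm_le_mul_of_sum_eq_sum {E ι : Type*} [NormedAddCommGroup E] [InnerProductSpace ℝ E]
    [Fintype ι] [Nonempty ι] {w : E} {u e : ι → E} {κ K : ℝ} (hκ : 0 ≤ κ)
    (hu : ∀ i, ‖w‖ ^ 2 ≤ κ * ⟪w, u i⟫) (he : ∀ i, ‖e i‖ ≤ K) (hsum : ∑ i, u i = ∑ i, e i) :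
    ‖w‖ ≤ κ * K := by
  have hK : 0 ≤ K := (norm_nonneg _).trans (he (Classical.arbitrary ι))
  have hcard : (0 : ℝ) < Fintype.card ι := Nat.cast_pos.2 Fintype.card_pos
  have hsq : ‖w‖ * ‖w‖ ≤ κ * K * ‖w‖ := by
    refine le_of_mul_le_mul_left ?_ hcard
    calc Fintype.card ι * (‖w‖ * ‖w‖) = ∑ _i : ι, ‖w‖ ^ 2 := by simp [sq]
      _ ≤ ∑ i, κ * ⟪w, u i⟫ := Finset.sum_le_sum fun i _ => hu i
      _ = κ * ∑ i, ⟪w, e i⟫ := by rw [← Finset.mul_sum, ← inner_sum, hsum, inner_sum]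
      _ ≤ κ * ∑ _i : ι, ‖w‖ * K := by
        gcongr with i
        exact (real_inner_le_norm w (e i)).trans (by gcongr; exact he i)
      _ = Fintype.card ι * (κ * K * ‖w‖) := by simp; ring
  exact not_lt.1 fun hlt => hsq.not_gt
    (mul_lt_mul_of_pos_right hlt ((mul_nonneg hκ hK).trans_lt hlt))

lemma norm_sub_sub_le_of_norm_fderiv_sub_le {E F : Type*} [NormedAddCommGroup E]
    [NormedSpace ℝ E] [NormedAddCommGroup F] [NormedSpace ℝ F] {g : E → F} {g' : E → E →L[ℝ] F}
    {x₀ u w : E} {Λ ρ : ℝ} (hΛ : 0 ≤ Λ)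
    (hg : ∀ x ∈ Metric.closedBall x₀ ρ, HasFDerivAt g (g' x) x)
    (hg' : ∀ x ∈ Metric.closedBall x₀ ρ, ‖g' x - g' x₀‖ ≤ Λ * ‖x - x₀‖)
    (hu : u ∈ Metric.closedBall x₀ ρ) (hw : w ∈ Metric.closedBall x₀ ρ) :
    ‖g u - g w - g' x₀ (u - w)‖ ≤ Λ * ρ * ‖u - w‖ :=
  (convex_closedBall x₀ ρ).norm_image_sub_le_of_norm_hasFDerivWithin_le'
    (fun x hx => (hg x hx).hasFDerivWithinAt)
    (fun x hx => (hg' x hx).trans (by gcongr; exact mem_closedBall_iff_norm.1 hx)) hw hu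

lemma gradient_const_mul_sum {E ι : Type*} [NormedAddCommGroup E] [InnerProductSpace ℝ E]
    [CompleteSpace E] [Fintype ι] {f : ι → E → ℝ} {x : E} (c : ℝ)
    (hf : ∀ i, DifferentiableAt ℝ (f i) x) :
    gradient (fun y => c * ∑ i, f i y) x = c • ∑ i, gradient (f i) x := by
  simp only [gradient]
  rw [fderiv_const_mul (DifferentiableAt.fun_sum fun i _ => hf i), fderiv_fun_sum fun i _ => hf i]
  simp

end Estimates

section UpdateCount

variable {n : ℕ}

/-- The number of steps before time `t` at which the cyclic order of the IQN iteration updates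
component `i`. -/
def updateCount (i : Fin n) (t : ℕ) : ℕ := t.count (· ≡ i [MOD n])

lemma updateCount_zero (i : Fin n) : updateCount i 0 = 0 := Nat.count_zero _

lemma div_le_updateCount (i : Fin n) (t : ℕ) : t / n ≤ updateCount i t := by
  rw [updateCount, Nat.count_modEq_card t i.pos]
  exact Nat.le_add_right _ _

lemma updateCount_cyc (hn : 1 ≤ n) (t : ℕ) : updateCount (cyc hn t) t = t / n := by
  rw [updateCount, Nat.count_modEq_card t hn]
  simp [cyc]

lemma updateCount_cyc_succ (hn : 1 ≤ n) (t : ℕ) : updateCount (cyc hn t) (t + 1) = t / n + 1 := by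
  rw [← updateCount_cyc hn t, updateCount, Nat.count_succ,
    if_pos (show t ≡ cyc hn t [MOD n] from (Nat.mod_modEq t n).symm)]
  rfl

lemma updateCount_succ_of_ne {hn : 1 ≤ n} {i : Fin n} {t : ℕ} (hi : i ≠ cyc hn t) :
    updateCount i (t + 1) = updateCount i t := by
  have hmod : ¬ t ≡ i [MOD n] := fun h =>
    hi (Fin.ext ((Nat.mod_eq_of_lt i.isLt).symm.trans h.symm))
  rw [updateCount, Nat.count_succ, if_neg hmod]
  rfl

end UpdateCount

section LocalModel

variable {p n : ℕ}

/-- Second-order information about the root-finding problem `∑ i, g i x = 0` near its solution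
`xstar`, in the form in which the analysis of IQN uses it: each `g i` is linearized by `H i` with
relative error `Λ ρ` on the balls of radius `ρ ≤ R` about `xstar`, and `κ` bounds the squared
operator norms of the weights `M i = H i ^ (-1/2)` and of their inverses. -/
structure IsLocalModel (g : Fin n → Vec p → Vec p) (H M : Fin n → Mat p) (xstar : Vec p)
    (κ Λ R : ℝ) : Prop where
  sum_eq_zero : ∑ i, g i xstar = 0
  isInvSqrt : ∀ i, IsInvSqrt (M i) (H i)
  one_le : 1 ≤ κ
  opNorm_sq_le : ∀ i, opNorm (M i) ^ 2 ≤ κ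
  opNorm_inv_sq_le : ∀ i, opNorm (M i)⁻¹ ^ 2 ≤ κ
  norm_sub_sub_le : ∀ i, ∀ ρ ≤ R, ∀ u ∈ Metric.closedBall xstar ρ,
    ∀ w ∈ Metric.closedBall xstar ρ, ‖g i u - g i w - applyM (H i) (u - w)‖ ≤ Λ * ρ * ‖u - w‖
  radius_pos : 0 < R
  lipschitz_pos : 0 < Λ

lemma exists_isLocalModel {g : Fin n → Vec p → Vec p} {H : Fin n → Vec p → Mat p}
    {M : Fin n → Mat p} {xstar : Vec p} {Λ : ℝ} (hΛ : 0 < Λ) (hsum : ∑ i, g i xstar = 0)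
    (hg : ∀ i, ∀ᶠ x in nhds xstar, HasFDerivAt (g i) (Matrix.toEuclideanCLM (𝕜 := ℝ) (H i x)) x)
    (hH : ∀ i, ∀ᶠ x in nhds xstar, opNorm (H i x - H i xstar) ≤ Λ * ‖x - xstar‖)
    (hM : ∀ i, IsInvSqrt (M i) (H i xstar)) :
    ∃ κ R, IsLocalModel g (fun i => H i xstar) M xstar κ Λ R := by
  obtain ⟨R, hR, hball⟩ := Metric.nhds_basis_closedBall.eventually_iff.1
    (eventually_all.2 fun i => (hg i).and (hH i))
  have hbound : ∀ i, opNorm (M i) ^ 2 + opNorm (M i)⁻¹ ^ 2 ≤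
      ∑ j, (opNorm (M j) ^ 2 + opNorm (M j)⁻¹ ^ 2) := fun i =>
    Finset.single_le_sum (f := fun j => opNorm (M j) ^ 2 + opNorm (M j)⁻¹ ^ 2)
      (fun j _ => by positivity) (Finset.mem_univ i)
  refine ⟨1 + ∑ j, (opNorm (M j) ^ 2 + opNorm (M j)⁻¹ ^ 2), R, hsum, hM, ?_, fun i => ?_,
    fun i => ?_, fun i ρ hρ u hu w hw => ?_, hR, hΛ⟩
  · exact le_add_of_nonneg_right (by positivity)
  · linarith [hbound i, sq_nonneg (opNorm (M i)⁻¹)]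
  · linarith [hbound i, sq_nonneg (opNorm (M i))]
  · have hsub := Metric.closedBall_subset_closedBall (x := xstar) hρ
    refine norm_sub_sub_le_of_norm_fderiv_sub_le hΛ.le (fun x hx => (hball (hsub hx) i).1)
      (fun x hx => ?_) hu hw
    rw [← map_sub]
    exact (hball (hsub hx) i).2

/-- Smallness conditions on the radii `δ` (matrices) and `ε` (points) of the region of attraction
with rate `r`. The first keeps half of the contraction budget `r` for the matrix errors, the second
makes the geometric series of the deteriorations `7 κ Λ ε r ^ k` sum to at most `δ`. -/
structure AdmissibleRadii (κ Λ R r δ ε : ℝ) : Prop where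
  rate_pos : 0 < r
  rate_lt_one : r < 1
  delta_pos : 0 < δ
  eps_pos : 0 < ε
  eps_le : ε ≤ R
  delta_le : 8 * κ ^ 2 * δ ≤ r
  deterioration_le : 7 * (κ * (Λ * ε)) ≤ δ * (1 - r)

lemma exists_admissibleRadii {κ Λ R r : ℝ} (hκ : 0 < κ) (hΛ : 0 < Λ) (hR : 0 < R) (hr0 : 0 < r)
    (hr1 : r < 1) : ∃ δ ε, AdmissibleRadii κ Λ R r δ ε := by
  have hδ : 0 < r / (8 * κ ^ 2) := by positivity
  refine ⟨r / (8 * κ ^ 2), min R (r / (8 * κ ^ 2) * (1 - r) / (7 * (κ * Λ))), hr0, hr1, hδ,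
    lt_min hR ?_, min_le_left _ _, (mul_div_cancel₀ _ (by positivity)).le, ?_⟩
  · exact div_pos (mul_pos hδ (sub_pos.2 hr1)) (by positivity)
  · have := (le_div_iff₀ (by positivity)).1
      (min_le_right R (r / (8 * κ ^ 2) * (1 - r) / (7 * (κ * Λ))))
    linarith

end LocalModel

section Iteration

variable {p n : ℕ}

/-- A run of the IQN iteration for the equation `∑ i, g i x = 0`: the recursion of `IQNState` with
arbitrary vector fields `g i` in place of the gradients. -/
structure IsIQNRun (hn : 1 ≤ n) (g : Fin n → Vec p → Vec p) (x : ℕ → Vec p)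
    (z : Fin n → ℕ → Vec p) (B : Fin n → ℕ → Mat p) : Prop where
  z_zero : ∀ i, z i 0 = x 0
  isSymm : ∀ i t, (B i t).IsSymm
  isUnit : ∀ t, IsUnit ((n : ℝ)⁻¹ • ∑ i, B i t)
  x_succ : ∀ t, x (t + 1) = applyM ((n : ℝ)⁻¹ • ∑ i, B i t)⁻¹
    ((n : ℝ)⁻¹ • ∑ i, applyM (B i t) (z i t) - (n : ℝ)⁻¹ • ∑ i, g i (z i t))
  z_succ_cyc : ∀ t, z (cyc hn t) (t + 1) = x (t + 1)
  z_succ_of_ne : ∀ t i, i ≠ cyc hn t → z i (t + 1) = z i t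
  step_ne_zero : ∀ t, x (t + 1) - z (cyc hn t) t ≠ 0
  B_succ_cyc : ∀ t, B (cyc hn t) (t + 1) = bfgsUpdate (B (cyc hn t) t)
    (x (t + 1) - z (cyc hn t) t) (g (cyc hn t) (x (t + 1)) - g (cyc hn t) (z (cyc hn t) t))
  B_succ_of_ne : ∀ t i, i ≠ cyc hn t → B i (t + 1) = B i t

lemma IQNState.isIQNRun {P : IQNProblem p n} (S : IQNState P) :
    IsIQNRun P.hn (fun i => gradient (P.f i)) S.x S.z S.B where
  z_zero := S.hz0
  isSymm := S.hsym
  isUnit := S.hinv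
  x_succ := S.hx
  z_succ_cyc := S.hzupd
  z_succ_of_ne := S.hzfix
  step_ne_zero t := S.hzupd t ▸ S.hs t
  B_succ_cyc t := S.hzupd t ▸ S.hBupd t
  B_succ_of_ne := S.hBfix

lemma IQNProblem.sum_gradient_xstar (P : IQNProblem p n) : ∑ i, gradient (P.f i) P.xstar = 0 := by
  have hdiff : ∀ i, DifferentiableAt ℝ (P.f i) P.xstar := fun i =>
    ((P.hC2 i).differentiable two_ne_zero).differentiableAt
  have hn : (n : ℝ)⁻¹ ≠ 0 := inv_ne_zero (Nat.cast_ne_zero.2 (Nat.one_le_iff_ne_zero.1 P.hn))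
  exact (smul_eq_zero.1 ((gradient_const_mul_sum _ hdiff).symm.trans P.hopt)).resolve_left hn

/-- The bounds carried by the induction on the time `t`: the distance of the stored point `z i` to
the solution has contracted by `r` at each of the `k` updates of component `i`, and the distance of
`B i` to `H i` has grown by at most `δ (1 - r) (1 + r + ⋯ + r ^ (k - 1)) = δ (1 - r ^ k)`. -/
structure TrackingBounds (z : Fin n → Vec p) (B H M : Fin n → Mat p) (xstar : Vec p)
    (r δ e : ℝ) (t : ℕ) : Prop where
  norm_sub_le : ∀ i, ‖z i - xstar‖ ≤ r ^ updateCount i t * e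
  wNorm_sub_le : ∀ i, wNorm (M i) (B i - H i) ≤ δ * (2 - r ^ updateCount i t)

variable {hn : 1 ≤ n} {g : Fin n → Vec p → Vec p} {x : ℕ → Vec p} {z : Fin n → ℕ → Vec p}
  {B : Fin n → ℕ → Mat p} {H M : Fin n → Mat p} {xstar : Vec p} {κ Λ R r δ ε e : ℝ} {t : ℕ}

namespace AdmissibleRadii

lemma eight_mul_delta_le (h : AdmissibleRadii κ Λ R r δ ε) (hκ : 1 ≤ κ) : 8 * δ ≤ r := by
  nlinarith [h.delta_le, h.delta_pos, one_le_pow₀ (n := 2) hκ]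

lemma seven_mul_le_delta (h : AdmissibleRadii κ Λ R r δ ε) : 7 * (κ * (Λ * ε)) ≤ δ :=
  h.deterioration_le.trans
    (mul_le_of_le_one_right h.delta_pos.le (sub_le_self 1 h.rate_pos.le))

lemma mul_mul_eps_le_half (h : AdmissibleRadii κ Λ R r δ ε) (hκ : 1 ≤ κ) :
    κ * (Λ * ε) ≤ 1 / 2 := by
  linarith [h.seven_mul_le_delta, h.eight_mul_delta_le hκ, h.rate_lt_one]

lemma contraction_le (h : AdmissibleRadii κ Λ R r δ ε) (hκ : 1 ≤ κ) :
    2 * κ * (κ * (2 * δ) + Λ * ε) ≤ r := calc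
  2 * κ * (κ * (2 * δ) + Λ * ε) = 8 * κ ^ 2 * δ / 2 + 2 * (κ * (Λ * ε)) := by ring
  _ ≤ r / 2 + r / 2 := by
    linarith [h.delta_le, h.seven_mul_le_delta, h.eight_mul_delta_le hκ, h.delta_pos]
  _ = r := add_halves r

end AdmissibleRadii

namespace IsIQNRun

lemma sum_applyM_sub_eq (h : IsIQNRun hn g x z B) (hsum : ∑ i, g i xstar = 0) (t : ℕ) :
    ∑ i, applyM (B i t) (x (t + 1) - xstar) =
      ∑ i, (applyM (B i t) (z i t - xstar) - (g i (z i t) - g i xstar)) := by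
  have hn0 : (n : ℝ)⁻¹ ≠ 0 := inv_ne_zero (Nat.cast_ne_zero.2 (Nat.one_le_iff_ne_zero.1 hn))
  have hx : ∑ i, applyM (B i t) (x (t + 1)) =
      ∑ i, applyM (B i t) (z i t) - ∑ i, g i (z i t) := by
    refine smul_right_injective _ hn0 ?_
    change (n : ℝ)⁻¹ • _ = (n : ℝ)⁻¹ • _
    rw [← applyM_smul_sum, h.x_succ t, smul_sub,
      applyM_applyM_inv ((Matrix.isUnit_iff_isUnit_det _).1 (h.isUnit t))]
  simp only [applyM_sub, Finset.sum_sub_distrib, hx, hsum]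
  abel

end IsIQNRun

lemma IsLocalModel.norm_residual_le (hL : IsLocalModel g H M xstar κ Λ R) {A : Mat p} {u : Vec p}
    {σ ρ : ℝ} (hρ : ρ ≤ R) (i : Fin n) (hA : wNorm (M i) (A - H i) ≤ σ) (hu : ‖u - xstar‖ ≤ ρ) :
    ‖applyM A (u - xstar) - (g i u - g i xstar)‖ ≤ (κ * σ + Λ * ρ) * ρ := by
  have hρ0 : 0 ≤ ρ := (norm_nonneg _).trans hu
  have hlin : ‖g i u - g i xstar - applyM (H i) (u - xstar)‖ ≤ Λ * ρ * ρ :=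
    (hL.norm_sub_sub_le i ρ hρ u (mem_closedBall_iff_norm.2 hu) xstar
      (Metric.mem_closedBall_self hρ0)).trans
      (mul_le_mul_of_nonneg_left hu (mul_nonneg hL.lipschitz_pos.le hρ0))
  have hmat : opNorm (A - H i) ≤ κ * σ :=
    (opNorm_le_opNorm_inv_sq_mul_wNorm (hL.isInvSqrt i).isUnit_det _).trans
      (mul_le_mul (hL.opNorm_inv_sq_le i) hA (frobNorm_nonneg _)
        (zero_le_one.trans hL.one_le))
  calc ‖applyM A (u - xstar) - (g i u - g i xstar)‖
      = ‖applyM (A - H i) (u - xstar) -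
          (g i u - g i xstar - applyM (H i) (u - xstar))‖ := by
        rw [applyM_matrix_sub]
        congr 1
        abel
    _ ≤ κ * σ * ρ + Λ * ρ * ρ := (norm_sub_le _ _).trans (add_le_add ((norm_applyM_le _ _).trans
        (mul_le_mul hmat hu (norm_nonneg _) ((opNorm_nonneg _).trans hmat))) hlin)
    _ = (κ * σ + Λ * ρ) * ρ := by ring

lemma IsIQNRun.norm_x_succ_sub_le (h : IsIQNRun hn g x z B)
    (hL : IsLocalModel g H M xstar κ Λ R) {σ ρ : ℝ} (hσ : σ ≤ 1 / 2) (hρ : ρ ≤ R)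
    (hz : ∀ i, ‖z i t - xstar‖ ≤ ρ) (hB : ∀ i, wNorm (M i) (B i t - H i) ≤ σ) :
    ‖x (t + 1) - xstar‖ ≤ 2 * κ * ((κ * σ + Λ * ρ) * ρ) := by
  have : NeZero n := ⟨Nat.one_le_iff_ne_zero.1 hn⟩
  have hκ0 : 0 ≤ 2 * κ := by linarith [hL.one_le]
  exact norm_le_mul_of_sum_eq_sum hκ0
    (fun i => (hL.isInvSqrt i).norm_sq_le_inner (hL.opNorm_sq_le i) ((hB i).trans hσ) _)
    (fun i => hL.norm_residual_le hρ i (hB i) (hz i)) (h.sum_applyM_sub_eq hL.sum_eq_zero t)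

lemma IsIQNRun.wNorm_B_succ_cyc_sub_le (h : IsIQNRun hn g x z B)
    (hL : IsLocalModel g H M xstar κ Λ R) {ρ : ℝ} (hρ : ρ ≤ R) (hκρ : κ * (Λ * ρ) ≤ 1 / 2)
    (hz : ‖z (cyc hn t) t - xstar‖ ≤ ρ) (hx : ‖x (t + 1) - xstar‖ ≤ ρ)
    (hB : wNorm (M (cyc hn t)) (B (cyc hn t) t - H (cyc hn t)) < 1) :
    wNorm (M (cyc hn t)) (B (cyc hn t) (t + 1) - H (cyc hn t)) ≤
      wNorm (M (cyc hn t)) (B (cyc hn t) t - H (cyc hn t)) + 7 * (κ * (Λ * ρ)) := by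
  rw [h.B_succ_cyc]
  exact (hL.isInvSqrt _).wNorm_bfgsUpdate_sub_le (h.isSymm _ t) hB (h.step_ne_zero t)
    (hL.opNorm_sq_le _) (mul_nonneg hL.lipschitz_pos.le ((norm_nonneg _).trans hx)) hκρ
    (hL.norm_sub_sub_le _ ρ hρ _ (mem_closedBall_iff_norm.2 hx) _ (mem_closedBall_iff_norm.2 hz))

namespace TrackingBounds

variable {z₀ : Fin n → Vec p} {B₀ : Fin n → Mat p}

lemma zero (hz : ∀ i, ‖z₀ i - xstar‖ ≤ e) (hB : ∀ i, wNorm (M i) (B₀ i - H i) ≤ δ) :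
    TrackingBounds z₀ B₀ H M xstar r δ e 0 where
  norm_sub_le i := by simpa [updateCount_zero] using hz i
  wNorm_sub_le i := by
    rw [updateCount_zero]
    linarith [hB i]

lemma norm_sub_le_pow_div (hT : TrackingBounds z₀ B₀ H M xstar r δ e t)
    (hrad : AdmissibleRadii κ Λ R r δ ε) (he : 0 ≤ e) (i : Fin n) :
    ‖z₀ i - xstar‖ ≤ r ^ (t / n) * e :=
  (hT.norm_sub_le i).trans <| mul_le_mul_of_nonneg_right
    (pow_le_pow_of_le_one hrad.rate_pos.le hrad.rate_lt_one.le (div_le_updateCount i t)) he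

lemma wNorm_sub_le_two_mul (hT : TrackingBounds z₀ B₀ H M xstar r δ e t)
    (hrad : AdmissibleRadii κ Λ R r δ ε) (i : Fin n) :
    wNorm (M i) (B₀ i - H i) ≤ 2 * δ := by
  have := mul_nonneg hrad.delta_pos.le (pow_nonneg hrad.rate_pos.le (updateCount i t))
  linarith [hT.wNorm_sub_le i]

lemma norm_x_succ_sub_le (h : IsIQNRun hn g x z B) (hL : IsLocalModel g H M xstar κ Λ R)
    (hrad : AdmissibleRadii κ Λ R r δ ε) (he : 0 ≤ e) (heε : e ≤ ε)
    (hT : TrackingBounds (z · t) (B · t) H M xstar r δ e t) :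
    ‖x (t + 1) - xstar‖ ≤ r ^ (t / n + 1) * e := by
  have hρ0 : 0 ≤ r ^ (t / n) * e := mul_nonneg (pow_nonneg hrad.rate_pos.le _) he
  have hρ : r ^ (t / n) * e ≤ ε :=
    (mul_le_of_le_one_left he (pow_le_one₀ hrad.rate_pos.le hrad.rate_lt_one.le)).trans heε
  have hδ : 2 * δ ≤ 1 / 2 := by
    linarith [hrad.eight_mul_delta_le hL.one_le, hrad.rate_lt_one]
  have hκ : 0 ≤ κ := zero_le_one.trans hL.one_le
  have hΛ := hL.lipschitz_pos
  calc ‖x (t + 1) - xstar‖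
      ≤ 2 * κ * ((κ * (2 * δ) + Λ * (r ^ (t / n) * e)) * (r ^ (t / n) * e)) :=
        h.norm_x_succ_sub_le hL hδ (hρ.trans hrad.eps_le) (hT.norm_sub_le_pow_div hrad he)
          (hT.wNorm_sub_le_two_mul hrad)
    _ ≤ 2 * κ * ((κ * (2 * δ) + Λ * ε) * (r ^ (t / n) * e)) := by gcongr
    _ = 2 * κ * (κ * (2 * δ) + Λ * ε) * (r ^ (t / n) * e) := by ring
    _ ≤ r * (r ^ (t / n) * e) := by gcongr; exact hrad.contraction_le hL.one_le
    _ = r ^ (t / n + 1) * e := by ring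

lemma wNorm_B_succ_cyc_sub_le (h : IsIQNRun hn g x z B) (hL : IsLocalModel g H M xstar κ Λ R)
    (hrad : AdmissibleRadii κ Λ R r δ ε) (he : 0 ≤ e) (heε : e ≤ ε)
    (hT : TrackingBounds (z · t) (B · t) H M xstar r δ e t) :
    wNorm (M (cyc hn t)) (B (cyc hn t) (t + 1) - H (cyc hn t)) ≤
      δ * (2 - r ^ (t / n + 1)) := by
  have hr0 := hrad.rate_pos
  have hpow : r ^ (t / n) ≤ 1 := pow_le_one₀ hr0.le hrad.rate_lt_one.le
  have hκ : 0 < κ := zero_lt_one.trans_le hL.one_le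
  have hΛ := hL.lipschitz_pos
  have hεR := hrad.eps_le
  have hdet : κ * (Λ * (r ^ (t / n) * ε)) ≤ κ * (Λ * ε) := by
    gcongr
    exact mul_le_of_le_one_left hrad.eps_pos.le hpow
  have hz := (hT.norm_sub_le_pow_div hrad he (cyc hn t)).trans
    (mul_le_mul_of_nonneg_left heε (pow_nonneg hr0.le _))
  have hx : ‖x (t + 1) - xstar‖ ≤ r ^ (t / n) * ε :=
    (norm_x_succ_sub_le h hL hrad he heε hT).trans <| mul_le_mul
      (pow_le_pow_of_le_one hr0.le hrad.rate_lt_one.le (Nat.le_succ _)) heε he (by positivity)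
  have hB := hT.wNorm_sub_le (cyc hn t)
  rw [updateCount_cyc] at hB
  have hB1 := hT.wNorm_sub_le_two_mul hrad (cyc hn t)
  have hstep := h.wNorm_B_succ_cyc_sub_le hL
    ((mul_le_of_le_one_left hrad.eps_pos.le hpow).trans hεR)
    (hdet.trans (hrad.mul_mul_eps_le_half hL.one_le)) hz hx
    (by linarith [hrad.eight_mul_delta_le hL.one_le, hrad.rate_lt_one])
  calc _ ≤ δ * (2 - r ^ (t / n)) + r ^ (t / n) * (7 * (κ * (Λ * ε))) := by linarith
    _ ≤ δ * (2 - r ^ (t / n)) + r ^ (t / n) * (δ * (1 - r)) :=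
      add_le_add_right (mul_le_mul_of_nonneg_left hrad.deterioration_le (by positivity)) _
    _ = δ * (2 - r ^ (t / n + 1)) := by ring

lemma succ (h : IsIQNRun hn g x z B) (hL : IsLocalModel g H M xstar κ Λ R)
    (hrad : AdmissibleRadii κ Λ R r δ ε) (he : 0 ≤ e) (heε : e ≤ ε)
    (hT : TrackingBounds (z · t) (B · t) H M xstar r δ e t) :
    TrackingBounds (z · (t + 1)) (B · (t + 1)) H M xstar r δ e (t + 1) where
  norm_sub_le i := by
    rcases eq_or_ne i (cyc hn t) with rfl | hi
    · rw [h.z_succ_cyc, updateCount_cyc_succ]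
      exact norm_x_succ_sub_le h hL hrad he heε hT
    · rw [h.z_succ_of_ne t i hi, updateCount_succ_of_ne hi]
      exact hT.norm_sub_le i
  wNorm_sub_le i := by
    rcases eq_or_ne i (cyc hn t) with rfl | hi
    · rw [updateCount_cyc_succ]
      exact wNorm_B_succ_cyc_sub_le h hL hrad he heε hT
    · rw [h.B_succ_of_ne t i hi, updateCount_succ_of_ne hi]
      exact hT.wNorm_sub_le i

end TrackingBounds

namespace IsIQNRun

lemma trackingBounds (h : IsIQNRun hn g x z B) (hL : IsLocalModel g H M xstar κ Λ R)
    (hrad : AdmissibleRadii κ Λ R r δ ε) (hx : ‖x 0 - xstar‖ < ε)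
    (hB : ∀ i, wNorm (M i) (B i 0 - H i) < δ) (t : ℕ) :
    TrackingBounds (z · t) (B · t) H M xstar r δ ‖x 0 - xstar‖ t := by
  induction t with
  | zero => exact .zero (fun i => (congrArg (‖· - xstar‖) (h.z_zero i)).le) fun i => (hB i).le
  | succ t ih => exact .succ h hL hrad (norm_nonneg _) hx.le ih

lemma isUnit_and_opNorm_le (h : IsIQNRun hn g x z B) (hL : IsLocalModel g H M xstar κ Λ R)
    {i : Fin n} (hB : wNorm (M i) (B i t - H i) ≤ 1 / 2) :
    opNorm (B i t) ≤ 2 * κ ∧ IsUnit (B i t) ∧ opNorm (B i t)⁻¹ ≤ 2 * κ :=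
  ⟨(hL.isInvSqrt i).opNorm_le (hL.opNorm_inv_sq_le i) hB,
    isUnit_and_opNorm_inv_le_of_coercive (by linarith [hL.one_le]) (h.isSymm i t)
      ((hL.isInvSqrt i).norm_sq_le_inner (hL.opNorm_sq_le i) hB)⟩

end IsIQNRun

theorem stmt5_general (hn : 1 ≤ n) {g : Fin n → Vec p → Vec p} {H : Fin n → Vec p → Mat p}
    {M : Fin n → Mat p} {xstar : Vec p} {Λ : ℝ} (hΛ : 0 < Λ) (hsum : ∑ i, g i xstar = 0)
    (hg : ∀ i, ∀ᶠ x in nhds xstar, HasFDerivAt (g i) (Matrix.toEuclideanCLM (𝕜 := ℝ) (H i x)) x)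
    (hH : ∀ i, ∀ᶠ x in nhds xstar, opNorm (H i x - H i xstar) ≤ Λ * ‖x - xstar‖)
    (hM : ∀ i, IsInvSqrt (M i) (H i xstar)) {r : ℝ} (hr : r ∈ Set.Ioo (0 : ℝ) 1) :
    ∃ ε > (0 : ℝ), ∃ δ > (0 : ℝ), ∃ C > (0 : ℝ), ∀ x z B, IsIQNRun hn g x z B →
      ‖x 0 - xstar‖ < ε → (∀ i, wNorm (M i) (B i 0 - H i xstar) < δ) →
      (∀ t, 1 ≤ t → ‖x t - xstar‖ ≤ r ^ ((t - 1) / n + 1) * ‖x 0 - xstar‖) ∧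
      ∀ i t, opNorm (B i t) ≤ C ∧ IsUnit (B i t) ∧ opNorm (B i t)⁻¹ ≤ C := by
  obtain ⟨κ, R, hL⟩ := exists_isLocalModel hΛ hsum hg hH hM
  have hκ : 0 < κ := zero_lt_one.trans_le hL.one_le
  obtain ⟨δ, ε, hrad⟩ := exists_admissibleRadii hκ hΛ hL.radius_pos hr.1 hr.2
  refine ⟨ε, hrad.eps_pos, δ, hrad.delta_pos, 2 * κ, by positivity, fun x z B hrun hx hB => ?_⟩
  have hT := hrun.trackingBounds hL hrad hx hB
  refine ⟨fun t ht => ?_, fun i t => hrun.isUnit_and_opNorm_le hL ?_⟩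
  · obtain ⟨t, rfl⟩ := Nat.exists_eq_add_of_le' ht
    exact (hT t).norm_x_succ_sub_le hrun hL hrad (norm_nonneg _) hx.le
  · linarith [(hT t).wNorm_sub_le_two_mul hrad i, hrad.eight_mul_delta_le hL.one_le, hr.2]

end Iteration

/-- local linear convergence of IQN, Lemma 3 of the paper. -/
theorem stmt5 {p n : ℕ} (P : IQNProblem p n) (M : Fin n → Mat p)
    (hM : ∀ i, (M i).PosDef ∧ M i * P.Hess i P.xstar * M i = 1)
    (r : ℝ) (hr : r ∈ Set.Ioo (0:ℝ) 1) :
    ∃ ε > (0:ℝ), ∃ δ > (0:ℝ), ∀ S : IQNState P,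
      ‖S.x 0 - P.xstar‖ < ε →
      (∀ i, wNorm (M i) (S.B i 0 - P.Hess i P.xstar) < δ) →
      (∀ t, 1 ≤ t → ‖S.x t - P.xstar‖ ≤ r ^ ((t-1)/n + 1) * ‖S.x 0 - P.xstar‖) ∧
      ∃ C > (0:ℝ), ∀ i t, opNorm (S.B i t) ≤ C ∧
        IsUnit (S.B i t) ∧ opNorm (S.B i t)⁻¹ ≤ C := by
  obtain ⟨ε, hε, δ, hδ, C, hC, h⟩ := stmt5_general P.hn P.hLtil P.sum_gradient_xstar
    (fun i => .of_forall (P.hHess i)) (fun i => .of_forall fun x => P.hLip i x P.xstar)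
    (fun i => ⟨Matrix.isHermitian_iff_isSymm.1 (hM i).1.isHermitian, (hM i).2⟩) hr
  exact ⟨ε, hε, δ, hδ, fun S hx hB => (h _ _ _ S.isIQNRun hx hB).imp_right fun hbd => ⟨C, hC, hbd⟩⟩

end
end
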